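/- For an arbitrary prime power q, the graph G(q², q+1) is K_{3,3}-free; concretely, any three pairwise distinct vertices of G(q², q+1) have at most two common neighbors. -/

import Mathlib

/-- The scaling relation by the subgroup `H ≤ Fˣ` on nonzero pairs of field elements:
`(a₁,b₁) ∼ (a₂,b₂)` iff there is `h ∈ H` with `a₁ = h·a₂` and `b₁ = h·b₂`. -/
def Grel {F : Type} [Field F] (H : Subgroup Fˣ) (p p' : {p : F × F // p ≠ 0}) : Prop :=
  ∃ h ∈ H, p.1.1 = (h : F) * p'.1.1 ∧ p.1.2 = (h : F) * p'.1.2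

/-- The vertex set of the graph `G(q,t)`: nonzero pairs modulo scaling by `H`. -/
def GVertex (F : Type) [Field F] (H : Subgroup Fˣ) : Type :=
  Quot (Grel H)

/-- Membership of a field element in the subgroup `H ≤ Fˣ`. -/
def memH {F : Type} [Field F] (H : Subgroup Fˣ) (x : F) : Prop :=
  ∃ h ∈ H, (h : F) = x

/-- Adjacency in the graph `G(q,t)`: `⟨a,b⟩` and `⟨x,y⟩` are adjacent iff `a·x + b·y ∈ H`
(this condition is independent of the chosen representatives). -/
def GAdj {F : Type} [Field F] (H : Subgroup Fˣ) (u v : GVertex F H) : Prop :=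
  ∃ p p' : {p : F × F // p ≠ 0},
    u = Quot.mk (Grel H) p ∧ v = Quot.mk (Grel H) p' ∧
      memH H (p.1.1 * p'.1.1 + p.1.2 * p'.1.2)

lemma Grel_equiv {F : Type} [Field F] (H : Subgroup Fˣ) : Equivalence (Grel H) := by
  refine ⟨fun p => ⟨1, H.one_mem, by simp⟩, ?_, ?_⟩
  · rintro p r ⟨h, hh, h1, h2⟩
    refine ⟨h⁻¹, H.inv_mem hh, ?_, ?_⟩
    · rw [h1]; simp
    · rw [h2]; simp
  · rintro p r s ⟨h, hh, h1, h2⟩ ⟨k, hk, h3, h4⟩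
    refine ⟨h * k, H.mul_mem hh hk, ?_, ?_⟩
    · rw [h1, h3]; push_cast; ring
    · rw [h2, h4]; push_cast; ring

lemma Grel_exact {F : Type} [Field F] (H : Subgroup Fˣ) (p r : {p : F × F // p ≠ 0})
    (h : Quot.mk (Grel H) p = Quot.mk (Grel H) r) : Grel H p r :=
  (Grel_equiv H).eqvGen_iff.1 (Quot.eqvGen_exact h)

lemma memH_mul {F : Type} [Field F] (H : Subgroup Fˣ) {x y : F}
    (hx : memH H x) (hy : memH H y) : memH H (x * y) := by
  obtain ⟨h, hh, rfl⟩ := hx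
  obtain ⟨k, hk, rfl⟩ := hy
  exact ⟨h * k, H.mul_mem hh hk, by push_cast; rfl⟩

lemma memH_div {F : Type} [Field F] (H : Subgroup Fˣ) {x y : F}
    (hx : memH H x) (hy : memH H y) : memH H (x / y) := by
  obtain ⟨h, hh, rfl⟩ := hx
  obtain ⟨k, hk, rfl⟩ := hy
  exact ⟨h / k, H.div_mem hh hk, by push_cast; rfl⟩

lemma memH_ne {F : Type} [Field F] (H : Subgroup Fˣ) {x : F}
    (hx : memH H x) : x ≠ 0 := by
  obtain ⟨h, hh, rfl⟩ := hx
  exact h.ne_zero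

lemma GAdj_mk {F : Type} [Field F] (H : Subgroup Fˣ) (p r : {p : F × F // p ≠ 0})
    (h : GAdj H (Quot.mk (Grel H) p) (Quot.mk (Grel H) r)) :
    memH H (p.1.1 * r.1.1 + p.1.2 * r.1.2) := by
  obtain ⟨p', r', h1, h2, h3⟩ := h
  obtain ⟨h, hh, e1, e2⟩ := Grel_exact H _ _ h1
  obtain ⟨k, hk, e3, e4⟩ := Grel_exact H _ _ h2
  rw [e1, e2, e3, e4]
  have := memH_mul H (memH_mul H ⟨h, hh, rfl⟩ ⟨k, hk, rfl⟩) h3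
  convert this using 1
  ring

/-- Two distinct vertices with a common neighbor are linearly independent. -/
lemma det_ne {F : Type} [Field F] (H : Subgroup Fˣ) (p r w : {p : F × F // p ≠ 0})
    (hne : Quot.mk (Grel H) p ≠ Quot.mk (Grel H) r)
    (h1 : memH H (w.1.1 * p.1.1 + w.1.2 * p.1.2))
    (h2 : memH H (w.1.1 * r.1.1 + w.1.2 * r.1.2)) :
    p.1.1 * r.1.2 - r.1.1 * p.1.2 ≠ 0 := by
  intro h0
  apply hne
  apply Quot.sound
  obtain ⟨c, hc, hce⟩ := memH_div H h1 h2
  have hn := memH_ne H h2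
  refine ⟨c, hc, ?_, ?_⟩
  · rw [hce]; field_simp; linear_combination w.1.2 * h0
  · rw [hce]; field_simp; linear_combination -w.1.1 * h0

/-- A common neighbor is determined by the ratio of its values. -/
lemma same_vertex {F : Type} [Field F] (H : Subgroup Fˣ) (p r w w' : {p : F × F // p ≠ 0})
    (hD : p.1.1 * r.1.2 - r.1.1 * p.1.2 ≠ 0)
    (h2 : memH H (w.1.1 * r.1.1 + w.1.2 * r.1.2))
    (h2' : memH H (w'.1.1 * r.1.1 + w'.1.2 * r.1.2))
    (he : (w.1.1 * p.1.1 + w.1.2 * p.1.2) / (w.1.1 * r.1.1 + w.1.2 * r.1.2) =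
      (w'.1.1 * p.1.1 + w'.1.2 * p.1.2) / (w'.1.1 * r.1.1 + w'.1.2 * r.1.2)) :
    Quot.mk (Grel H) w = Quot.mk (Grel H) w' := by
  apply Quot.sound
  obtain ⟨c, hc, hce⟩ := memH_div H h2 h2'
  have hn := memH_ne H h2
  have hn' := memH_ne H h2'
  rw [div_eq_div_iff hn hn'] at he
  refine ⟨c, hc, ?_, ?_⟩
  · rw [hce, div_mul_eq_mul_div, eq_div_iff hn']
    apply mul_left_cancel₀ hD
    linear_combination r.1.2 * he
  · rw [hce, div_mul_eq_mul_div, eq_div_iff hn']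
    apply mul_left_cancel₀ hD
    linear_combination -r.1.1 * he

lemma quad_three {F : Type} [Field F] {A B C x y z : F} (hx : A * x ^ 2 + B * x + C = 0)
    (hy : A * y ^ 2 + B * y + C = 0) (hz : A * z ^ 2 + B * z + C = 0)
    (hxy : x ≠ y) (hxz : x ≠ z) (hyz : y ≠ z) : A = 0 := by
  have h1 : A * (x + y) + B = 0 := by
    apply mul_left_cancel₀ (sub_ne_zero.2 hxy); linear_combination hx - hy
  have h2 : A * (x + z) + B = 0 := by
    apply mul_left_cancel₀ (sub_ne_zero.2 hxz); linear_combination hx - hz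
  apply mul_left_cancel₀ (sub_ne_zero.2 hyz)
  linear_combination h1 - h2

lemma quad_of_norm {F : Type} [Field F] (σ : F →+* F) (H : Subgroup Fˣ)
    (hσ : ∀ x, memH H x → x * σ x = 1) (α β s t : F) (hs : memH H s) (ht : memH H t)
    (hu : memH H (α * s + β * t)) :
    (α * σ β) * (s / t) ^ 2 + (α * σ α + β * σ β - 1) * (s / t) + σ α * β = 0 := by
  have h1 := hσ _ hs
  have h2 := hσ _ ht
  have h3 := hσ _ hu
  have hn := memH_ne H ht
  simp only [map_add, map_mul] at h3
  have hz : s / t = s * σ t := by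
    rw [div_eq_iff hn]; linear_combination -s * h2
  rw [hz]
  generalize σ s = s' at *
  generalize σ t = t' at *
  generalize σ α = a' at *
  generalize σ β = b' at *
  have e : a' * β = a' * β * (s * s') * (t * t') := by rw [h1, h2]; ring
  rw [e]
  linear_combination (s * t') * h3 - (α * a') * (s * t') * h1 - (β * b') * (s * t') * h2

lemma exists_frob {q : ℕ} (hq : IsPrimePow q)
    {F : Type} [Field F] [Fintype F] (hF : Fintype.card F = q ^ 2) :
    ∃ σ : F →+* F, ∀ x, σ x = x ^ q := by
  obtain ⟨p, n, hp, hn, rfl⟩ := hq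
  have hp' : p.Prime := hp.nat_prime
  have : Fact p.Prime := ⟨hp'⟩
  obtain ⟨r, hr⟩ := CharP.exists F
  obtain ⟨m, hr', hm⟩ := FiniteField.card F r
  have : p = r := by
    have : r ∣ (p ^ n) ^ 2 := by
      rw [← hF, hm]; exact dvd_pow_self _ m.pos.ne'
    exact ((Nat.prime_dvd_prime_iff_eq hr' hp').1
      (hr'.dvd_of_dvd_pow (hr'.dvd_of_dvd_pow this))).symm
  subst this
  exact ⟨iterateFrobenius F p n, fun x => iterateFrobenius_def p n x⟩

/-- For an arbitrary prime power `q`, the graph `G(q², q+1)` is `K_{3,3}`-free: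
any three pairwise distinct vertices have at most two common neighbors. -/
theorem G_q2_K33_free {q : ℕ} (hq : IsPrimePow q)
    {F : Type} [Field F] [Fintype F] (hF : Fintype.card F = q ^ 2)
    (H : Subgroup Fˣ) (hH : Nat.card H = q + 1)
    (v₁ v₂ v₃ : GVertex F H) (h₁₂ : v₁ ≠ v₂) (h₁₃ : v₁ ≠ v₃) (h₂₃ : v₂ ≠ v₃) :
    {w : GVertex F H | GAdj H w v₁ ∧ GAdj H w v₂ ∧ GAdj H w v₃}.ncard ≤ 2 := by
  obtain ⟨σ, hσ⟩ := exists_frob hq hF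
  have hN : ∀ x, memH H x → x * σ x = 1 := by
    rintro x ⟨h, hh, rfl⟩
    rw [hσ, ← pow_succ', ← hH]
    have h1 : (⟨h, hh⟩ : H) ^ Nat.card H = 1 := pow_card_eq_one'
    have h2 : h ^ Nat.card H = 1 := congrArg Subtype.val h1
    rw [← Units.val_pow_eq_pow_val, h2, Units.val_one]
  have : Finite (GVertex F H) := by unfold GVertex; infer_instance
  by_contra hcon
  rw [not_le, Set.two_lt_ncard_iff (Set.toFinite _)] at hcon
  obtain ⟨w₁, w₂, w₃, ⟨a11, a12, a13⟩, ⟨a21, a22, a23⟩, ⟨a31, a32, a33⟩, n12, n13, n23⟩ := hcon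
  obtain ⟨v₁, rfl⟩ := Quot.exists_rep v₁
  obtain ⟨v₂, rfl⟩ := Quot.exists_rep v₂
  obtain ⟨v₃, rfl⟩ := Quot.exists_rep v₃
  obtain ⟨w₁, rfl⟩ := Quot.exists_rep w₁
  obtain ⟨w₂, rfl⟩ := Quot.exists_rep w₂
  obtain ⟨w₃, rfl⟩ := Quot.exists_rep w₃
  replace a11 := GAdj_mk H _ _ a11
  replace a12 := GAdj_mk H _ _ a12
  replace a13 := GAdj_mk H _ _ a13
  replace a21 := GAdj_mk H _ _ a21
  replace a22 := GAdj_mk H _ _ a22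
  replace a23 := GAdj_mk H _ _ a23
  replace a31 := GAdj_mk H _ _ a31
  replace a32 := GAdj_mk H _ _ a32
  replace a33 := GAdj_mk H _ _ a33
  have d12 := det_ne H _ _ _ h₁₂ a11 a12
  have d13 := det_ne H _ _ _ h₁₃ a11 a13
  have d32 := det_ne H _ _ _ h₂₃.symm a13 a12
  have key : ∀ w : {p : F × F // p ≠ 0}, w.1.1 * v₃.1.1 + w.1.2 * v₃.1.2 =
      (v₃.1.1 * v₂.1.2 - v₂.1.1 * v₃.1.2) / (v₁.1.1 * v₂.1.2 - v₂.1.1 * v₁.1.2) *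
        (w.1.1 * v₁.1.1 + w.1.2 * v₁.1.2) +
      (v₁.1.1 * v₃.1.2 - v₃.1.1 * v₁.1.2) / (v₁.1.1 * v₂.1.2 - v₂.1.1 * v₁.1.2) *
        (w.1.1 * v₂.1.1 + w.1.2 * v₂.1.2) := by
    intro w
    rw [div_mul_eq_mul_div, div_mul_eq_mul_div, ← add_div, eq_div_iff d12]
    ring
  rw [key] at a13 a23 a33
  have q1 := quad_of_norm σ H hN _ _ _ _ a11 a12 a13
  have q2 := quad_of_norm σ H hN _ _ _ _ a21 a22 a23
  have q3 := quad_of_norm σ H hN _ _ _ _ a31 a32 a33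
  have hA := quad_three q1 q2 q3
    (fun e => n12 (same_vertex H _ _ _ _ d12 a12 a22 e))
    (fun e => n13 (same_vertex H _ _ _ _ d12 a12 a32 e))
    (fun e => n23 (same_vertex H _ _ _ _ d12 a22 a32 e))
  rcases mul_eq_zero.1 hA with h | h
  · exact div_ne_zero d32 d12 h
  · exact div_ne_zero d13 d12 ((map_eq_zero σ).1 h)
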